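/- Let (X,μ) be a measure space, let S, N : X → [0,∞] be measurable, and let C > 0 be such that for every α > 0, μ({x : S(x) > α}) ≤ C·μ({x : N(x) > α}) + C·α^{-2} ∫₀^α s·μ({x : N(x) > s}) ds. Then ∫_X S dμ ≤ 2C ∫_X N dμ. -/

import Mathlib

open MeasureTheory

/-!
Write `F s = μ {N > s}`. By the layer cake formula `∫ S dμ = ∫₀^∞ μ {S > α} dα`, integrating the
hypothesis over `α ∈ (0, ∞)` bounds `∫ S dμ` by `C ∫₀^∞ F + C ∫₀^∞ α⁻² ∫₀^α s F(s) ds dα`.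
Tonelli's theorem and `∫_s^∞ α⁻² dα = s⁻¹` turn the double integral into `∫₀^∞ F` as well, and
`∫₀^∞ F = ∫ N dμ`. No σ-finiteness of `μ` is needed: the interchange only involves Lebesgue
measure on `ℝ`, and the monotone function `F` is measurable.
-/

/-- The layer cake formula for `[0, ∞]`-valued functions. When `f = ∞` on a set of positive measure
both sides are infinite; otherwise `f` agrees a.e. with the real-valued function `(f ·).toReal`. -/
lemma lintegral_eq_lintegral_meas_ofReal_lt {X : Type*} [MeasurableSpace X] (μ : Measure X)
    (f : X → ENNReal) (hf : Measurable f) :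
    ∫⁻ x, f x ∂μ = ∫⁻ t in Set.Ioi (0 : ℝ), μ {x : X | ENNReal.ofReal t < f x} := by
  by_cases hinf : μ {x | f x = ⊤} = 0
  · have hfin : ∀ᵐ x ∂μ, f x ≠ ⊤ := by
      rw [ae_iff]
      simpa using hinf
    have h := lintegral_eq_lintegral_meas_lt μ
      (Filter.Eventually.of_forall fun x => ENNReal.toReal_nonneg (a := f x))
      hf.ennreal_toReal.aemeasurable
    calc ∫⁻ x, f x ∂μ = ∫⁻ x, ENNReal.ofReal (f x).toReal ∂μ := by
          refine lintegral_congr_ae ?_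
          filter_upwards [hfin] with x hx
          exact (ENNReal.ofReal_toReal hx).symm
      _ = ∫⁻ t in Set.Ioi (0 : ℝ), μ {x : X | t < (f x).toReal} := h
      _ = _ := by
          refine setLIntegral_congr_fun measurableSet_Ioi fun t ht => ?_
          refine measure_congr ?_
          filter_upwards [hfin] with x hx
          exact propext (ENNReal.ofReal_lt_iff_lt_toReal (le_of_lt ht) hx).symm
  · have hL : ∫⁻ x, f x ∂μ = ⊤ := by
      by_contra h
      have := ae_lt_top hf h
      rw [ae_iff] at this
      exact hinf (by simpa using this)
    rw [hL, eq_comm, eq_top_iff]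
    calc (⊤ : ENNReal) = ∫⁻ _ in Set.Ioi (0 : ℝ), μ {x | f x = ⊤} := by
          simp [ENNReal.mul_top hinf]
      _ ≤ _ := by
          refine lintegral_mono fun t => measure_mono fun x hx => ?_
          simp only [Set.mem_ofPred_eq] at hx ⊢
          simp [hx]

lemma lintegral_Ioi_inv_sq {s : ℝ} (hs : 0 < s) :
    ∫⁻ α in Set.Ioi s, (ENNReal.ofReal α ^ 2)⁻¹ = (ENNReal.ofReal s)⁻¹ := by
  have hint := integrableOn_Ioi_rpow_of_lt (a := -2) (by norm_num) hs
  have hval := integral_Ioi_rpow_of_lt (a := -2) (by norm_num) hs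
  calc ∫⁻ α in Set.Ioi s, (ENNReal.ofReal α ^ 2)⁻¹
      = ∫⁻ α in Set.Ioi s, ENNReal.ofReal (α ^ (-2 : ℝ)) := by
        refine setLIntegral_congr_fun measurableSet_Ioi fun α hα => ?_
        have hα0 : 0 < α := hs.trans hα
        rw [Real.rpow_neg hα0.le, ENNReal.ofReal_inv_of_pos (by positivity), Real.rpow_ofNat,
          ENNReal.ofReal_pow hα0.le]
    _ = ENNReal.ofReal (∫ α in Set.Ioi s, α ^ (-2 : ℝ)) := by
        refine (ofReal_integral_eq_lintegral_ofReal hint ?_).symm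
        filter_upwards [ae_restrict_mem measurableSet_Ioi] with α hα
        exact Real.rpow_nonneg (hs.trans hα).le _
    _ = (ENNReal.ofReal s)⁻¹ := by
        rw [hval, ← ENNReal.ofReal_inv_of_pos hs]
        norm_num [Real.rpow_neg_one]

/-- Tonelli's theorem on the region `0 < s < α`: the averaging operator `F ↦ α⁻² ∫₀^α s F(s) ds`
preserves the integral over `(0, ∞)`. -/
lemma lintegral_inv_sq_mul_lintegral {F : ℝ → ENNReal} (hF : Measurable F) :
    ∫⁻ α in Set.Ioi (0 : ℝ), (ENNReal.ofReal α ^ 2)⁻¹ *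
        ∫⁻ s in Set.Ioo (0 : ℝ) α, ENNReal.ofReal s * F s
      = ∫⁻ s in Set.Ioi (0 : ℝ), F s := by
  set G : ℝ → ℝ → ENNReal := fun α s =>
    (Set.Iio α).indicator (fun s => (ENNReal.ofReal α ^ 2)⁻¹ * (ENNReal.ofReal s * F s)) s with hG
  have hGm : Measurable (Function.uncurry G) := by
    have : Function.uncurry G = {p : ℝ × ℝ | p.2 < p.1}.indicator
        (fun p => (ENNReal.ofReal p.1 ^ 2)⁻¹ * (ENNReal.ofReal p.2 * F p.2)) := by
      ext ⟨α, s⟩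
      simp [hG, Function.uncurry, Set.indicator]
    rw [this]
    exact Measurable.indicator (by fun_prop) (measurableSet_lt measurable_snd measurable_fst)
  calc _ = ∫⁻ α in Set.Ioi (0 : ℝ), ∫⁻ s in Set.Ioi (0 : ℝ), G α s := by
        refine lintegral_congr fun α => ?_
        rw [← lintegral_const_mul _ (by fun_prop), hG]
        simp only
        rw [setLIntegral_indicator measurableSet_Iio, Set.inter_comm, Set.Ioi_inter_Iio]
    _ = ∫⁻ s in Set.Ioi (0 : ℝ), ∫⁻ α in Set.Ioi (0 : ℝ), G α s :=
        lintegral_lintegral_swap hGm.aemeasurable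
    _ = ∫⁻ s in Set.Ioi (0 : ℝ), F s := by
        refine setLIntegral_congr_fun measurableSet_Ioi fun s hs => ?_
        have hs0 : 0 < s := hs
        have h1 : ∀ α, G α s = (Set.Ioi s).indicator
            (fun α => (ENNReal.ofReal α ^ 2)⁻¹ * (ENNReal.ofReal s * F s)) α := by
          intro α
          simp [hG, Set.indicator]
        simp only [h1]
        rw [setLIntegral_indicator measurableSet_Ioi,
          Set.inter_eq_left.mpr (Set.Ioi_subset_Ioi hs0.le),
          lintegral_mul_const _ (by fun_prop), lintegral_Ioi_inv_sq hs0, ← mul_assoc,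
          ENNReal.inv_mul_cancel (by simpa using hs0) ENNReal.ofReal_ne_top, one_mul]

/-- If `S, N : X → [0,∞]` satisfy the good-λ type distributional inequality
`μ({S > α}) ≤ C·μ({N > α}) + C·α⁻² ∫₀^α s·μ({N > s}) ds` for all `α > 0`, then
`∫ S dμ ≤ 2C ∫ N dμ`. -/
theorem good_lambda_implies_L1 {X : Type*} [MeasurableSpace X] (μ : Measure X)
    (S N : X → ENNReal) (hS : Measurable S) (hN : Measurable N)
    (C : ℝ) (hC : 0 < C)
    (hgood : ∀ α : ℝ, 0 < α →
      μ {x : X | ENNReal.ofReal α < S x}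
        ≤ ENNReal.ofReal C * μ {x : X | ENNReal.ofReal α < N x}
          + ENNReal.ofReal C / (ENNReal.ofReal α) ^ 2 *
              ∫⁻ s in Set.Ioo (0 : ℝ) α,
                ENNReal.ofReal s * μ {x : X | ENNReal.ofReal s < N x}) :
    ∫⁻ x, S x ∂μ ≤ ENNReal.ofReal (2 * C) * ∫⁻ x, N x ∂μ := by
  have hF : Measurable fun s : ℝ => μ {x : X | ENNReal.ofReal s < N x} := by
    refine Antitone.measurable fun a b hab => measure_mono fun x hx => ?_
    exact (ENNReal.ofReal_le_ofReal hab).trans_lt hx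
  rw [lintegral_eq_lintegral_meas_ofReal_lt μ S hS, lintegral_eq_lintegral_meas_ofReal_lt μ N hN]
  refine (setLIntegral_mono' measurableSet_Ioi fun α hα => hgood α hα).trans ?_
  simp only [div_eq_mul_inv, mul_assoc]
  rw [lintegral_add_left (hF.const_mul _), lintegral_const_mul _ hF,
    lintegral_const_mul' _ _ ENNReal.ofReal_ne_top, lintegral_inv_sq_mul_lintegral hF,
    ENNReal.ofReal_mul zero_le_two, ENNReal.ofReal_ofNat, mul_assoc, two_mul]
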